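/- (Proposition 1) Let A be an n×n real matrix (n ≥ 1) with all entries positive, with rows a_1, …, a_n, and let b ∈ ℝⁿ have all entries positive. Define the sequence w_0 = b and w_{t+1} = (A ◊ w_t)/‖A ◊ w_t‖₁. Then the iteration converges in at most two steps: for every t ≥ 2, w_t equals the vector v with entries v_i = (1 + ‖a_i‖₁)/Σ_{j=1}^n (1 + ‖a_j‖₁). -/

import Mathlib

/-- ◊ product: `w ◊ x = ∑ i, (sign (x i) * w i + x i * sign (w i))`. -/
noncomputable def diamondProd {n : ℕ} (w x : Fin n → ℝ) : ℝ :=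
  ∑ i, (Real.sign (x i) * w i + x i * Real.sign (w i))

/-- `A ◊ w`: the vector whose i-th entry is the ◊ product of the i-th row of `A` with `w`. -/
noncomputable def matDiamond {n : ℕ} (A : Matrix (Fin n) (Fin n) ℝ) (w : Fin n → ℝ) : Fin n → ℝ :=
  fun i => diamondProd (A i) w

/-- ℓ1 norm of a vector in ℝⁿ. -/
def l1Norm {n : ℕ} (x : Fin n → ℝ) : ℝ := ∑ i, |x i|

/-!
On positive vectors the ◊ product no longer mixes its arguments: `x ◊ y = ‖x‖₁ + ‖y‖₁`. The first
step makes the iterate entrywise positive of `ℓ1` norm `1`. From then on `A ◊ w` has entries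
`1 + ‖aᵢ‖₁`, whatever `w` is, so that its normalization no longer changes.
-/

section

variable {n : ℕ}

lemma l1Norm_of_nonneg {x : Fin n → ℝ} (hx : 0 ≤ x) : l1Norm x = ∑ i, x i :=
  Finset.sum_congr rfl fun i _ => abs_of_nonneg (hx i)

lemma l1Norm_nonneg (x : Fin n → ℝ) : 0 ≤ l1Norm x :=
  Finset.sum_nonneg fun i _ => abs_nonneg (x i)

lemma l1Norm_pos {x : Fin n → ℝ} (hx : x ≠ 0) : 0 < l1Norm x := by
  obtain ⟨i, hi⟩ := Function.ne_iff.1 hx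
  exact Finset.sum_pos' (fun j _ => abs_nonneg (x j)) ⟨i, Finset.mem_univ i, abs_pos.2 hi⟩

/-- The normalization `x / ‖x‖₁` of a vector to `ℓ1` norm `1`, with value `0` at `x = 0`. -/
noncomputable def l1Normalize (x : Fin n → ℝ) : Fin n → ℝ :=
  fun i => x i / l1Norm x

lemma l1Norm_l1Normalize {x : Fin n → ℝ} (hx : x ≠ 0) : l1Norm (l1Normalize x) = 1 :=
  calc l1Norm (l1Normalize x)
    _ = ∑ i, |x i| / l1Norm x :=
      Finset.sum_congr rfl fun i _ => by
        rw [l1Normalize, abs_div, abs_of_nonneg (l1Norm_nonneg x)]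
    _ = l1Norm x / l1Norm x := (Finset.sum_div ..).symm
    _ = 1 := div_self (l1Norm_pos hx).ne'

lemma l1Normalize_apply_pos {x : Fin n → ℝ} {i : Fin n} (hi : 0 < x i) : 0 < l1Normalize x i :=
  div_pos hi (l1Norm_pos (Function.ne_iff.2 ⟨i, hi.ne'⟩))

lemma realSign_mul_self (r : ℝ) : Real.sign r * r = |r| := by
  obtain hr | rfl | hr := lt_trichotomy r 0
  · rw [Real.sign_of_neg hr, abs_of_neg hr, neg_one_mul]
  · rw [mul_zero, abs_zero]
  · rw [Real.sign_of_pos hr, abs_of_pos hr, one_mul]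

lemma realSign_nonneg {r : ℝ} (hr : 0 ≤ r) : 0 ≤ Real.sign r := by
  obtain rfl | hr := hr.eq_or_lt
  · rw [Real.sign_zero]
  · rw [Real.sign_of_pos hr]
    exact zero_le_one

lemma diamondProd_of_sign_eq {x y : Fin n → ℝ} (h : ∀ i, Real.sign (x i) = Real.sign (y i)) :
    diamondProd x y = l1Norm x + l1Norm y := by
  rw [diamondProd, Finset.sum_add_distrib]
  congr 1 <;> refine Finset.sum_congr rfl fun i _ => ?_
  · rw [← h, realSign_mul_self]
  · rw [h, mul_comm, realSign_mul_self]

lemma diamondProd_of_pos {x y : Fin n → ℝ} (hx : ∀ i, 0 < x i) (hy : ∀ i, 0 < y i) :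
    diamondProd x y = l1Norm x + l1Norm y :=
  diamondProd_of_sign_eq fun i => by rw [Real.sign_of_pos (hx i), Real.sign_of_pos (hy i)]

lemma diamondProd_pos {x y : Fin n → ℝ} (hx : ∀ i, 0 < x i) (hy : 0 < y) :
    0 < diamondProd x y :=
  calc 0 < ∑ i, y i := Fintype.sum_pos hy
    _ ≤ diamondProd x y := Finset.sum_le_sum fun i _ => by
      rw [Real.sign_of_pos (hx i), mul_one]
      exact le_add_of_nonneg_left (mul_nonneg (realSign_nonneg (hy.le i)) (hx i).le)

/-- One step of the ◊-MAPI associated with `A`. -/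
noncomputable def mapi (A : Matrix (Fin n) (Fin n) ℝ) (w : Fin n → ℝ) : Fin n → ℝ :=
  l1Normalize (matDiamond A w)

variable {A : Matrix (Fin n) (Fin n) ℝ} {w : Fin n → ℝ}

lemma matDiamond_apply_pos (hA : ∀ i j, 0 < A i j) (hw : 0 < w) (i : Fin n) :
    0 < matDiamond A w i :=
  diamondProd_pos (hA i) hw

lemma mapi_apply_pos (hA : ∀ i j, 0 < A i j) (hw : 0 < w) (i : Fin n) : 0 < mapi A w i :=
  l1Normalize_apply_pos (matDiamond_apply_pos hA hw i)

lemma mapi_pos (hA : ∀ i j, 0 < A i j) (hw : 0 < w) : 0 < mapi A w :=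
  have : Nonempty (Fin n) := (Pi.lt_def.1 hw).2.nonempty
  lt_of_strongLT (mapi_apply_pos hA hw)

lemma l1Norm_mapi (hA : ∀ i j, 0 < A i j) (hw : 0 < w) : l1Norm (mapi A w) = 1 := by
  obtain ⟨i, -⟩ := (Pi.lt_def.1 hw).2
  exact l1Norm_l1Normalize (Function.ne_iff.2 ⟨i, (matDiamond_apply_pos hA hw i).ne'⟩)

lemma mapi_of_pos_of_l1Norm_eq_one (hA : ∀ i j, 0 < A i j) (hw : ∀ i, 0 < w i)
    (hw₁ : l1Norm w = 1) :
    mapi A w = fun i => (1 + l1Norm (A i)) / ∑ j, (1 + l1Norm (A j)) := by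
  have hAw : matDiamond A w = fun i => 1 + l1Norm (A i) := funext fun i => by
    rw [matDiamond, diamondProd_of_pos (hA i) hw, hw₁, add_comm]
  have hnonneg : 0 ≤ fun i => 1 + l1Norm (A i) := fun i =>
    add_nonneg zero_le_one (l1Norm_nonneg (A i))
  funext i
  rw [mapi, hAw, l1Normalize, l1Norm_of_nonneg hnonneg]

lemma mapi_mapi (hA : ∀ i j, 0 < A i j) (hw : 0 < w) :
    mapi A (mapi A w) = fun i => (1 + l1Norm (A i)) / ∑ j, (1 + l1Norm (A j)) :=
  mapi_of_pos_of_l1Norm_eq_one hA (mapi_apply_pos hA hw) (l1Norm_mapi hA hw)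

end

/-- The product order makes `0 < b` weaker than entrywise positivity: `b` may have zero entries. -/
theorem mapi_converges_in_two_steps_general {n : ℕ}
    (A : Matrix (Fin n) (Fin n) ℝ) (hA : ∀ i j, 0 < A i j)
    (b : Fin n → ℝ) (hb : 0 < b)
    (w : ℕ → Fin n → ℝ) (hw0 : w 0 = b)
    (hwt : ∀ t, w (t + 1) = mapi A (w t)) :
    ∀ t, 2 ≤ t →
      w t = fun i => (1 + l1Norm (A i)) / ∑ j, (1 + l1Norm (A j)) := by
  have hpos : ∀ t, 0 < w t := by
    intro t
    induction t with
    | zero => exact hw0 ▸ hb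
    | succ t ih => exact hwt t ▸ mapi_pos hA ih
  intro t ht
  obtain ⟨s, rfl⟩ := Nat.exists_eq_add_of_le' ht
  rw [hwt (s + 1), hwt s, mapi_mapi hA (hpos s)]

/-- Proposition 1: the ◊-MAPI iteration on a positive matrix, started from a positive
vector, converges in at most two steps to the vector with entries
`(1 + ‖aᵢ‖₁) / ∑ⱼ (1 + ‖aⱼ‖₁)`. -/
theorem mapi_converges_in_two_steps {n : ℕ} (hn : 1 ≤ n)
    (A : Matrix (Fin n) (Fin n) ℝ) (hA : ∀ i j, 0 < A i j)
    (b : Fin n → ℝ) (hb : ∀ i, 0 < b i)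
    (w : ℕ → Fin n → ℝ) (hw0 : w 0 = b)
    (hwt : ∀ t, w (t + 1) = fun i =>
      matDiamond A (w t) i / l1Norm (matDiamond A (w t))) :
    ∀ t, 2 ≤ t →
      w t = fun i => (1 + l1Norm (A i)) / ∑ j, (1 + l1Norm (A j)) := by
  have : Nonempty (Fin n) := Fin.pos_iff_nonempty.1 hn
  exact mapi_converges_in_two_steps_general A hA b (lt_of_strongLT hb) w hw0 hwt
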